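/- arXiv:2305.17295 — 2 statements merged into one kernel-verified Lean document; each statement's English description precedes it below -/
import Mathlib

section
/- For every distortion level D > 0, the minimal achievable rate of direct coding for machines equals that of model splitting: R_XY(D;T) = R_Y(D;T). -/
open scoped BigOperators

/-- Joint distribution P(a,b) = p(a)·k(a)(b) induced by a source `p` and a channel `k`,
as a real number. -/
noncomputable def jointP {A B : Type*} [Fintype A] [Fintype B] (p : PMF A) (k : A → PMF B)
    (a : A) (b : B) : ℝ :=
  (p a * k a b).toReal

/-- Marginal distribution of the second coordinate of the joint induced by `(p, k)`. -/
noncomputable def margSnd {A B : Type*} [Fintype A] [Fintype B] (p : PMF A) (k : A → PMF B)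
    (b : B) : ℝ :=
  ∑ a, jointP p k a b

/-- Mutual information I(A;B) = ∑_{a,b} P(a,b)·log(P(a,b)/(P(a)·P(b))) of the joint
induced by `(p, k)`; the convention 0·log 0 = 0 holds automatically in Lean. -/
noncomputable def mutualInfo {A B : Type*} [Fintype A] [Fintype B] (p : PMF A)
    (k : A → PMF B) : ℝ :=
  ∑ a, ∑ b, jointP p k a b * Real.log (jointP p k a b / ((p a).toReal * margSnd p k b))

/-- Expected distortion E[d(A,B)] under the joint induced by `(p, k)`. -/
noncomputable def expDist {A B : Type*} [Fintype A] [Fintype B] (p : PMF A) (k : A → PMF B)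
    (d : A → B → ℝ) : ℝ :=
  ∑ a, ∑ b, jointP p k a b * d a b

/-- Rate-distortion function: infimum of mutual information over all channels `A → PMF B`
meeting the expected-distortion constraint `≤ D`. -/
noncomputable def rate {A B : Type*} [Fintype A] [Fintype B] (p : PMF A) (d : A → B → ℝ)
    (D : ℝ) : ℝ :=
  sInf { r : ℝ | ∃ k : A → PMF B, expDist p k d ≤ D ∧ r = mutualInfo p k }

/-- Conditional probability P(A = a | B = b) under the joint induced by `(p, k)`. -/
noncomputable def condProb {A B : Type*} [Fintype A] [Fintype B] (p : PMF A) (k : A → PMF B)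
    (a : A) (b : B) : ℝ :=
  jointP p k a b / margSnd p k b

/-!
Let `Z` be the output of the channel. Precomposing with the feature extractor `g` turns a channel
from features into a channel from sources with the same mutual information and the same distortion,
because both quantities are expectations of functions of `(g X, Z)`. Conversely, averaging a channel
from sources over the fibers of `g` preserves the joint law of `(g X, Z)`, hence the distortion, and
by the log-sum inequality on each fiber it does not increase the mutual information.
-/

section LogSum

open Finset

lemma sum_mul_log_sum_div_sum_le {ι : Type*} {s : Finset ι} {u v : ι → ℝ}
    (hu : ∀ i ∈ s, 0 ≤ u i) (hv : ∀ i ∈ s, 0 ≤ v i) (huv : ∀ i ∈ s, v i = 0 → u i = 0) :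
    (∑ i ∈ s, u i) * Real.log ((∑ i ∈ s, u i) / ∑ i ∈ s, v i) ≤
      ∑ i ∈ s, u i * Real.log (u i / v i) := by
  have cancel (i : ι) (hi : i ∈ s) : v i * (u i / v i) = u i :=
    mul_div_cancel_of_imp' (huv i hi)
  rcases (sum_nonneg hv).eq_or_lt with hV | hV
  · have hu0 (i : ι) (hi : i ∈ s) : u i = 0 :=
      huv i hi ((sum_eq_zero_iff_of_nonneg hv).1 hV.symm i hi)
    rw [sum_eq_zero hu0, zero_mul, sum_eq_zero fun i hi => by rw [hu0 i hi, zero_mul]]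
  -- Jensen's inequality for `x * log x` at the points `u i / v i` with weights `v i`.
  have jensen := Real.convexOn_mul_log.map_centerMass_le hv hV (p := fun i => u i / v i)
    fun i hi => div_nonneg (hu i hi) (hv i hi)
  have hmean : s.centerMass v (fun i => u i / v i) = (∑ i ∈ s, u i) / ∑ i ∈ s, v i := by
    simp only [centerMass, smul_eq_mul, sum_congr rfl cancel, inv_mul_eq_div]
  have hvalue : s.centerMass v ((fun x => x * Real.log x) ∘ fun i => u i / v i) =
      (∑ i ∈ s, u i * Real.log (u i / v i)) / ∑ i ∈ s, v i := by
    simp only [centerMass, smul_eq_mul, Function.comp_apply, ← mul_assoc, inv_mul_eq_div]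
    rw [sum_congr rfl fun i hi => by rw [cancel i hi]]
  rwa [hmean, hvalue, div_mul_eq_mul_div, div_le_div_iff_of_pos_right hV] at jensen

end LogSum

lemma csInf_eq_csInf_of_isCoinitialFor {α : Type*} [ConditionallyCompleteLinearOrder α]
    {s t : Set α} (hst : IsCoinitialFor s t) (hts : IsCoinitialFor t s) : sInf s = sInf t := by
  have hlower : lowerBounds s = lowerBounds t :=
    (lowerBounds_mono_of_isCoinitialFor hts).antisymm (lowerBounds_mono_of_isCoinitialFor hst)
  rcases s.eq_empty_or_nonempty with rfl | hs
  · rw [Set.not_nonempty_iff_eq_empty.1 fun ht => Set.not_nonempty_empty (hts.nonempty ht)]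
  by_cases hbdd : BddBelow s
  · exact (((isGLB_congr hlower).1 (isGLB_csInf hs hbdd)).csInf_eq (hst.nonempty hs)).symm
  · rw [csInf_of_not_bddBelow hbdd,
      csInf_of_not_bddBelow (s := t) (by rwa [BddBelow, ← hlower])]

section Pushforward

open Finset

variable {A C : Type*} [Fintype A] (p : PMF A) (g : A → C) (c : C)

lemma map_apply_eq_sum_fiber [DecidableEq C] : p.map g c = ∑ a with g a = c, p a := by
  rw [← PMF.toOuterMeasure_apply_singleton, PMF.toOuterMeasure_map_apply,
    ← PMF.toOuterMeasure_apply_finset, coe_filter_univ]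
  rfl

lemma toReal_map_apply_eq_sum_fiber [DecidableEq C] :
    (p.map g c).toReal = ∑ a with g a = c, (p a).toReal := by
  rw [map_apply_eq_sum_fiber, ENNReal.toReal_sum fun a _ => p.apply_ne_top a]

lemma sum_toReal_map_mul [Fintype C] (φ : C → ℝ) :
    ∑ c, (p.map g c).toReal * φ c = ∑ a, (p a).toReal * φ (g a) := by
  classical
  rw [← sum_fiberwise univ g]
  refine sum_congr rfl fun c _ => ?_
  rw [toReal_map_apply_eq_sum_fiber, sum_mul]
  exact sum_congr rfl fun a ha => by rw [(mem_filter.1 ha).2]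

variable {c} in
lemma map_apply_mul_bind_filter_apply [DecidableEq C] {B : Type*} (k : A → PMF B)
    (hc : ∃ a ∈ g ⁻¹' {c}, a ∈ p.support) (b : B) :
    p.map g c * (p.filter (g ⁻¹' {c}) hc).bind k b = ∑ a with g a = c, p a * k a b := by
  have hmass : ∑' a, (g ⁻¹' {c}).indicator p a = p.map g c := by
    rw [← PMF.toOuterMeasure_apply, ← PMF.toOuterMeasure_map_apply,
      PMF.toOuterMeasure_apply_singleton]
  have hmass_ne_zero : p.map g c ≠ 0 := by
    obtain ⟨a, hac, ha⟩ := hc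
    exact (PMF.mem_support_map_iff g p c).2 ⟨a, ha, hac⟩
  rw [PMF.bind_apply, tsum_fintype, mul_sum, sum_filter]
  refine sum_congr rfl fun a _ => ?_
  rw [PMF.filter_apply, hmass, ← mul_assoc, mul_left_comm,
    ENNReal.mul_inv_cancel hmass_ne_zero (PMF.apply_ne_top _ _), mul_one]
  by_cases ha : g a = c <;> simp [ha]

end Pushforward

section Channel

open Finset

variable {A B C : Type*} [Fintype A] [Fintype B] (p : PMF A)

section Basic

variable (k : A → PMF B) (a : A) (b : B)

lemma jointP_nonneg : 0 ≤ jointP p k a b :=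
  ENNReal.toReal_nonneg

lemma margSnd_nonneg : 0 ≤ margSnd p k b :=
  sum_nonneg fun a _ => jointP_nonneg p k a b

variable {p k a b} in
lemma jointP_eq_zero_of_mul_margSnd_eq_zero (h : (p a).toReal * margSnd p k b = 0) :
    jointP p k a b = 0 := by
  rcases mul_eq_zero.1 h with hp | hm
  · rw [jointP, ENNReal.toReal_mul, hp, zero_mul]
  · exact (sum_eq_zero_iff_of_nonneg fun a _ => jointP_nonneg p k a b).1 hm a (mem_univ a)

lemma mutualInfo_eq_expDist :
    mutualInfo p k = expDist p k fun a b => Real.log ((k a b).toReal / margSnd p k b) := by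
  refine sum_congr rfl fun a _ => sum_congr rfl fun b _ => ?_
  rw [jointP, ENNReal.toReal_mul]
  rcases eq_or_ne (p a).toReal 0 with ha | ha
  · simp only [ha, zero_mul]
  · rw [mul_div_mul_left _ _ ha]

end Basic

variable [Fintype C] (g : A → C)

section Comp

variable (k : C → PMF B)

lemma margSnd_comp (b : B) : margSnd p (k ∘ g) b = margSnd (p.map g) k b := by
  simp only [margSnd, jointP, ENNReal.toReal_mul]
  exact (sum_toReal_map_mul p g fun c => (k c b).toReal).symm

lemma expDist_comp (d : C → B → ℝ) : expDist p (k ∘ g) (d ∘ g) = expDist (p.map g) k d := by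
  simp only [expDist, jointP, ENNReal.toReal_mul, mul_assoc, ← mul_sum]
  exact (sum_toReal_map_mul p g fun c => ∑ b, (k c b).toReal * d c b).symm

lemma mutualInfo_comp : mutualInfo p (k ∘ g) = mutualInfo (p.map g) k := by
  simp only [mutualInfo_eq_expDist, margSnd_comp]
  exact expDist_comp p g k fun c b => Real.log ((k c b).toReal / margSnd (p.map g) k b)

end Comp

variable {g} {k : A → PMF B} {κ : C → PMF B}

variable (g k κ) in
/-- The channel `κ` is the average of `k` over the fibers of `g`: when `X` has law `p` and `Z` is
the output of `k` on input `X`, it is a conditional law of `Z` given `g X`. The condition is stated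
on joint laws, so it leaves `κ c` free when `g X = c` has probability zero. -/
def IsFiberAverage [DecidableEq C] : Prop :=
  ∀ c b, jointP (p.map g) κ c b = ∑ a with g a = c, jointP p k a b

variable (g k) in
lemma exists_isFiberAverage [DecidableEq C] : ∃ κ : C → PMF B, IsFiberAverage p g k κ := by
  suffices hchannel : ∀ c, ∃ q : PMF B, ∀ b,
      p.map g c * q b = ∑ a with g a = c, p a * k a b by
    choose κ hκ using hchannel
    refine ⟨κ, fun c b => ?_⟩
    simp only [jointP]
    rw [hκ, ENNReal.toReal_sum fun a _ =>
      ENNReal.mul_ne_top (p.apply_ne_top a) ((k a).apply_ne_top b)]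
  intro c
  by_cases hc : ∃ a ∈ g ⁻¹' {c}, a ∈ p.support
  · exact ⟨(p.filter _ hc).bind k, map_apply_mul_bind_filter_apply p g k hc⟩
  · have hp : ∀ a ∈ univ.filter (g · = c), p a = 0 := fun a ha => by
      by_contra hpa
      exact hc ⟨a, (mem_filter.1 ha).2, hpa⟩
    refine ⟨k p.support_nonempty.some, fun b => ?_⟩
    rw [map_apply_eq_sum_fiber, sum_eq_zero hp, zero_mul,
      sum_eq_zero fun a ha => by rw [hp a ha, zero_mul]]

namespace IsFiberAverage

variable {p} [DecidableEq C]

lemma margSnd_eq (h : IsFiberAverage p g k κ) (b : B) :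
    margSnd (p.map g) κ b = margSnd p k b := by
  simp only [margSnd, h _ b]
  exact sum_fiberwise univ g fun a => jointP p k a b

lemma expDist_eq (h : IsFiberAverage p g k κ) (d : C → B → ℝ) :
    expDist (p.map g) κ d = expDist p k (d ∘ g) := by
  simp only [expDist, h _ _, sum_mul]
  rw [← sum_fiberwise univ g]
  refine sum_congr rfl fun c _ => sum_comm.trans (sum_congr rfl fun a ha => ?_)
  simp only [Function.comp_apply, (mem_filter.1 ha).2]

lemma mutualInfo_le (h : IsFiberAverage p g k κ) : mutualInfo (p.map g) κ ≤ mutualInfo p k := by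
  simp only [mutualInfo]
  rw [← sum_fiberwise univ g]
  refine sum_le_sum fun c _ => ?_
  rw [sum_comm]
  refine sum_le_sum fun b _ => ?_
  rw [h, h.margSnd_eq, toReal_map_apply_eq_sum_fiber, sum_mul _ _ (margSnd p k b)]
  exact sum_mul_log_sum_div_sum_le (fun a _ => jointP_nonneg p k a b)
    (fun a _ => mul_nonneg ENNReal.toReal_nonneg (margSnd_nonneg p k b))
    fun a _ => jointP_eq_zero_of_mul_margSnd_eq_zero

end IsFiberAverage

end Channel

theorem direct_eq_modelSplitting_general {A B C : Type*} [Fintype A] [Fintype B] [Fintype C]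
    (p : PMF A) (g : A → C) (d : C → B → ℝ) (D : ℝ) :
    rate p (d ∘ g) D = rate (p.map g) d D := by
  classical
  refine csInf_eq_csInf_of_isCoinitialFor ?_ ?_
  · rintro _ ⟨k, hk, rfl⟩
    obtain ⟨κ, hκ⟩ := exists_isFiberAverage p g k
    exact ⟨_, ⟨κ, (hκ.expDist_eq d).trans_le hk, rfl⟩, hκ.mutualInfo_le⟩
  · rintro _ ⟨k, hk, rfl⟩
    exact ⟨_, ⟨k ∘ g, (expDist_comp p g k d).trans_le hk, rfl⟩, (mutualInfo_comp p g k).le⟩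

/-- For every D > 0, the minimal achievable rate of direct coding for machines
equals that of model splitting: R_XY(D;T) = R_Y(D;T). Here f = h ∘ g. -/
theorem direct_eq_modelSplitting
    {𝒳 𝒴 𝒯 : Type*} [Fintype 𝒳] [Fintype 𝒴] [Fintype 𝒯]
    [Nonempty 𝒳] [Nonempty 𝒴] [Nonempty 𝒯]
    (pX : PMF 𝒳) (g : 𝒳 → 𝒴) (h : 𝒴 → 𝒯)
    (dT : 𝒯 → 𝒯 → ℝ) (hdT : ∀ t t', 0 ≤ dT t t')
    (D : ℝ) (hD : 0 < D) :
    rate pX (fun x yhat => dT (h (g x)) (h yhat)) D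
      = rate (pX.map g) (fun y yhat => dT (h y) (h yhat)) D :=
  direct_eq_modelSplitting_general pX g (fun y yhat => dT (h y) (h yhat)) D
end

section
/- Suppose that h₂(g₂(ŷ₁)) lies in the range of f for every ŷ₁ ∈ 𝒴₁, and h₂(ŷ₂) lies in the range of f for every ŷ₂ ∈ 𝒴₂. Then for every distortion level D > 0, there is no difference in the minimal achievable rate when encoding either intermediate feature: R_{Y₂}(D;T) = R_{Y₁}(D;T) = R_X(D;T). -/
open scoped BigOperators

/-!
Measure the information a channel carries by the relative entropy of the joint law of input and
output with respect to the product of its marginals; it can only decrease when input and output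
are processed separately. A channel out of `g X` extends to one out of `X` by precomposing with
`g`, and a channel out of `X` restricts to one out of `g X` by first resampling `X` from its
posterior given `g X`. The distortion sees only `g X`, and in each direction the new joint law is
obtained from the old one by separate processing, so the two sources have the same
rate-distortion function. The reconstruction alphabets may be exchanged because the range
hypothesis provides maps in both directions that preserve the distortion.
-/

open MeasureTheory ProbabilityTheory InformationTheory

section RelativeEntropy

variable {α β : Type*} [MeasurableSpace α]

lemma absolutelyContinuous_toMeasure {P Q : PMF α} (h : P.support ⊆ Q.support) :
    P.toMeasure ≪ Q.toMeasure := by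
  refine .mk fun s hs hQ => ?_
  rw [PMF.toMeasure_apply_eq_zero_iff _ hs] at hQ ⊢
  exact hQ.mono_left h

lemma rnDeriv_toMeasure_mul [MeasurableSingletonClass α] {P Q : PMF α}
    (h : P.support ⊆ Q.support) (x : α) :
    P.toMeasure.rnDeriv Q.toMeasure x * Q x = P x := by
  have hx := Measure.setLIntegral_rnDeriv (absolutelyContinuous_toMeasure h) {x}
  rwa [lintegral_singleton, PMF.toMeasure_apply_singleton _ _ (.singleton x),
    PMF.toMeasure_apply_singleton _ _ (.singleton x)] at hx

lemma klDiv_toMeasure_ne_top [Finite α] [MeasurableSingletonClass α] {P Q : PMF α}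
    (h : P.support ⊆ Q.support) : klDiv P.toMeasure Q.toMeasure ≠ ⊤ :=
  klDiv_ne_top (absolutelyContinuous_toMeasure h) .of_finite

lemma toReal_klDiv_toMeasure [Fintype α] [MeasurableSingletonClass α] {P Q : PMF α}
    (h : P.support ⊆ Q.support) :
    (klDiv P.toMeasure Q.toMeasure).toReal =
      ∑ x, (P x).toReal * Real.log ((P x).toReal / (Q x).toReal) := by
  rw [toReal_klDiv_of_measure_eq (absolutelyContinuous_toMeasure h) (by simp),
    PMF.integral_eq_sum]
  refine Finset.sum_congr rfl fun x _ => ?_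
  by_cases hx : P x = 0
  · simp [hx]
  have hQ : (Q x).toReal ≠ 0 := ENNReal.toReal_ne_zero.mpr ⟨h hx, Q.apply_ne_top x⟩
  rw [smul_eq_mul, llr, ← rnDeriv_toMeasure_mul h x, ENNReal.toReal_mul,
    mul_div_cancel_right₀ _ hQ]

lemma klDiv_toMeasure_bind_le [Countable α] [MeasurableSingletonClass α] [MeasurableSpace β]
    (P Q : PMF α) (κ : α → PMF β) :
    klDiv (P.bind κ).toMeasure (Q.bind κ).toMeasure ≤ klDiv P.toMeasure Q.toMeasure := by
  let K : Kernel α β := ⟨fun a => (κ a).toMeasure, .of_discrete⟩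
  have : IsMarkovKernel K := ⟨fun a => inferInstanceAs (IsProbabilityMeasure (κ a).toMeasure)⟩
  have toMeasure_bind (R : PMF α) : (R.bind κ).toMeasure = K ∘ₘ R.toMeasure := by
    ext s hs
    rw [Measure.bind_apply hs K.aemeasurable, PMF.toMeasure_bind_apply _ _ _ hs]
    simp [lintegral_countable', PMF.toMeasure_apply_singleton, mul_comm, K]
  simpa only [toMeasure_bind] using klDiv_comp_right_le _ _ K

end RelativeEntropy

section Posterior

variable {A B C : Type*}

open Classical in
/-- The law of a source `a ∼ p` conditioned on the event `g a = b`, as a channel from the values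
of `g` back to the source. Where the event has probability zero the value is arbitrary; it is
taken to be `p`. -/
noncomputable def posteriorPMF (p : PMF A) (g : A → B) (b : B) : PMF A :=
  if h : ∃ a ∈ g ⁻¹' {b}, a ∈ p.support then p.filter (g ⁻¹' {b}) h else p

open Classical in
lemma map_apply_mul_posteriorPMF_apply (p : PMF A) (g : A → B) (b : B) (a : A) :
    p.map g b * posteriorPMF p g b a = if b = g a then p a else 0 := by
  have map_apply_eq : p.map g b = ∑' a, (g ⁻¹' {b}).indicator p a := by
    simp [PMF.map_apply, Set.indicator_apply, eq_comm]
  by_cases h : ∃ a ∈ g ⁻¹' {b}, a ∈ p.support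
  · have map_ne_zero : p.map g b ≠ 0 := by
      obtain ⟨a, rfl, ha⟩ := h
      exact (PMF.mem_support_map_iff g p _).mpr ⟨a, ha, rfl⟩
    rw [posteriorPMF, dif_pos h, PMF.filter_apply, ← map_apply_eq, mul_left_comm,
      ENNReal.mul_inv_cancel map_ne_zero (PMF.apply_ne_top _ _), mul_one]
    simp [Set.indicator_apply, eq_comm]
  · have apply_eq_zero (a : A) (ha : b = g a) : p a = 0 := by
      by_contra hpa
      exact h ⟨a, ha.symm, hpa⟩
    have map_eq_zero : p.map g b = 0 := by
      simpa [PMF.map_apply] using apply_eq_zero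
    rw [map_eq_zero, zero_mul]
    split_ifs with ha
    exacts [(apply_eq_zero a ha).symm, rfl]

lemma map_bind_posteriorPMF_bind (p : PMF A) (g : A → B) (f : B → A → PMF C) :
    ((p.map g).bind fun b => (posteriorPMF p g b).bind (f b)) = p.bind fun a => f (g a) a := by
  classical
  ext c
  simp_rw [PMF.bind_apply, ← ENNReal.tsum_mul_left, ← mul_assoc, map_apply_mul_posteriorPMF_apply,
    ite_mul, zero_mul]
  rw [ENNReal.tsum_comm]
  simp_rw [tsum_ite_eq]

end Posterior

section JointLaw

variable {A B C A' B' : Type*}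

/-- The law of the pair (input, output) of the channel `k` fed with the source `p`; `jointP` is
its real-valued mass function. -/
noncomputable def jointPMF (p : PMF A) (k : A → PMF B) : PMF (A × B) :=
  p.bind fun a => (k a).map (Prod.mk a)

/-- The law of a pair of independent variables with laws `p` and `q`, encoded as the joint law of
a channel that ignores its input. -/
noncomputable def prodPMF (p : PMF A) (q : PMF B) : PMF (A × B) :=
  jointPMF p fun _ => q

lemma jointPMF_apply (p : PMF A) (k : A → PMF B) (a : A) (b : B) :
    jointPMF p k (a, b) = p a * k a b := by
  classical
  rw [jointPMF, PMF.bind_apply, tsum_eq_single a fun a' ha => by simp [ha.symm]]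
  simp [PMF.map_apply]

lemma map_fst_jointPMF (p : PMF A) (k : A → PMF B) : (jointPMF p k).map Prod.fst = p := by
  simp [jointPMF, PMF.map, Function.comp_def]

lemma map_snd_jointPMF (p : PMF A) (k : A → PMF B) : (jointPMF p k).map Prod.snd = p.bind k := by
  simp [jointPMF, PMF.map, Function.comp_def]

lemma support_jointPMF_subset (p : PMF A) (k : A → PMF B) :
    (jointPMF p k).support ⊆ (prodPMF p (p.bind k)).support := by
  rintro ⟨a, b⟩ hab
  rw [PMF.mem_support_iff, jointPMF_apply] at hab
  rw [PMF.mem_support_iff, prodPMF, jointPMF_apply]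
  exact mul_ne_zero (left_ne_zero_of_mul hab)
    ((PMF.mem_support_bind_iff p k b).mpr ⟨a, left_ne_zero_of_mul hab, right_ne_zero_of_mul hab⟩)

lemma prodPMF_bind_prodPMF (p : PMF A) (q : PMF B) (e : A → PMF A') (r : B → PMF B') :
    ((prodPMF p q).bind fun z => prodPMF (e z.1) (r z.2)) = prodPMF (p.bind e) (q.bind r) := by
  simp only [prodPMF, jointPMF, PMF.bind_bind, PMF.bind_map, Function.comp_def, PMF.map_bind]
  simp_rw [PMF.bind_comm q]

lemma jointPMF_map_right (p : PMF A) (k : A → PMF B) (ψ : B → C) :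
    jointPMF p (fun a => (k a).map ψ) = (jointPMF p k).map (Prod.map id ψ) := by
  simp [jointPMF, PMF.map_bind, PMF.map_comp, Function.comp_def]

lemma jointPMF_map_left (p : PMF A) (g : A → B) (k : B → PMF C) :
    jointPMF (p.map g) k = (jointPMF p (k ∘ g)).map (Prod.map g id) := by
  simp [jointPMF, PMF.map_bind, PMF.map_comp, Function.comp_def]

lemma jointPMF_posteriorPMF_bind (p : PMF A) (g : A → B) (k : A → PMF C) :
    jointPMF (p.map g) (fun b => (posteriorPMF p g b).bind k) =
      (jointPMF p k).map (Prod.map g id) := by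
  simp_rw [jointPMF, PMF.map_bind, map_bind_posteriorPMF_bind, PMF.map_comp, Function.comp_def,
    Prod.map, id]

lemma jointPMF_comp (p : PMF A) (g : A → B) (k : B → PMF C) :
    jointPMF p (k ∘ g) =
      (jointPMF (p.map g) k).bind fun z => prodPMF (posteriorPMF p g z.1) (PMF.pure z.2) := by
  simp_rw [prodPMF, jointPMF, PMF.bind_bind, PMF.bind_map (k _), Function.comp_def, PMF.pure_map,
    PMF.bind_comm (k _), map_bind_posteriorPMF_bind]
  rfl

end JointLaw

section MutualInformation

variable {A B A' B' : Type*} [Fintype A] [Fintype B] [Fintype A'] [Fintype B']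

lemma jointP_eq_toReal_jointPMF (p : PMF A) (k : A → PMF B) (a : A) (b : B) :
    jointP p k a b = (jointPMF p k (a, b)).toReal := by
  rw [jointP, jointPMF_apply]

lemma margSnd_eq_toReal_bind (p : PMF A) (k : A → PMF B) (b : B) :
    margSnd p k b = (p.bind k b).toReal := by
  rw [PMF.bind_apply, tsum_fintype, ENNReal.toReal_sum fun a _ =>
    ENNReal.mul_ne_top (p.apply_ne_top a) ((k a).apply_ne_top b)]
  rfl

lemma mutualInfo_eq_toReal_klDiv [MeasurableSpace A] [MeasurableSingletonClass A]
    [MeasurableSpace B] [MeasurableSingletonClass B] (p : PMF A) (k : A → PMF B) :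
    mutualInfo p k = (klDiv (jointPMF p k).toMeasure (prodPMF p (p.bind k)).toMeasure).toReal := by
  rw [toReal_klDiv_toMeasure (support_jointPMF_subset p k), Fintype.sum_prod_type]
  simp_rw [mutualInfo, jointP_eq_toReal_jointPMF, margSnd_eq_toReal_bind, prodPMF, jointPMF_apply,
    ENNReal.toReal_mul]

theorem mutualInfo_le_of_jointPMF_eq_bind {p : PMF A} {k : A → PMF B} {p' : PMF A'}
    {k' : A' → PMF B'} (e : A → PMF A') (r : B → PMF B')
    (h : jointPMF p' k' = (jointPMF p k).bind fun z => prodPMF (e z.1) (r z.2)) :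
    mutualInfo p' k' ≤ mutualInfo p k := by
  have fst_eq : p' = p.bind e := by
    rw [← map_fst_jointPMF p' k', h, PMF.map_bind]
    conv_rhs => rw [← map_fst_jointPMF p k, PMF.bind_map]
    simp_rw [prodPMF, map_fst_jointPMF, Function.comp_def]
  have snd_eq : p'.bind k' = (p.bind k).bind r := by
    rw [← map_snd_jointPMF p' k', h, PMF.map_bind, ← map_snd_jointPMF p k, PMF.bind_map]
    simp_rw [prodPMF, map_snd_jointPMF, PMF.bind_const, Function.comp_def]
  have prod_eq : prodPMF p' (p'.bind k') =
      (prodPMF p (p.bind k)).bind fun z => prodPMF (e z.1) (r z.2) := by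
    rw [prodPMF_bind_prodPMF, snd_eq, fst_eq]
  let _ : MeasurableSpace A := ⊤
  let _ : MeasurableSpace B := ⊤
  let _ : MeasurableSpace A' := ⊤
  let _ : MeasurableSpace B' := ⊤
  rw [mutualInfo_eq_toReal_klDiv, mutualInfo_eq_toReal_klDiv, h, prod_eq]
  exact ENNReal.toReal_mono (klDiv_toMeasure_ne_top (support_jointPMF_subset p k))
    (klDiv_toMeasure_bind_le _ _ _)

lemma mutualInfo_le_of_jointPMF_eq_map {p : PMF A} {k : A → PMF B} {p' : PMF A'}
    {k' : A' → PMF B'} {φ : A → A'} {ψ : B → B'}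
    (h : jointPMF p' k' = (jointPMF p k).map (Prod.map φ ψ)) :
    mutualInfo p' k' ≤ mutualInfo p k := by
  refine mutualInfo_le_of_jointPMF_eq_bind (PMF.pure ∘ φ) (PMF.pure ∘ ψ) (h.trans ?_)
  simp [PMF.map, prodPMF, jointPMF, Function.comp_def, Prod.map]

end MutualInformation

section Distortion

variable {A B A' B' : Type*} [Fintype A] [Fintype B] [Fintype A'] [Fintype B']

lemma expDist_eq_integral [MeasurableSpace A] [MeasurableSingletonClass A]
    [MeasurableSpace B] [MeasurableSingletonClass B] (p : PMF A) (k : A → PMF B) (d : A → B → ℝ) :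
    expDist p k d = ∫ z, d z.1 z.2 ∂(jointPMF p k).toMeasure := by
  simp_rw [PMF.integral_eq_sum, Fintype.sum_prod_type, expDist, jointP_eq_toReal_jointPMF,
    smul_eq_mul]

lemma expDist_of_jointPMF_eq_map {p : PMF A} {k : A → PMF B} {p' : PMF A'} {k' : A' → PMF B'}
    {φ : A → A'} {ψ : B → B'} (h : jointPMF p' k' = (jointPMF p k).map (Prod.map φ ψ))
    (d : A' → B' → ℝ) :
    expDist p' k' d = expDist p k fun a b => d (φ a) (ψ b) := by
  let _ : MeasurableSpace A := ⊤
  let _ : MeasurableSpace B := ⊤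
  let _ : MeasurableSpace A' := ⊤
  let _ : MeasurableSpace B' := ⊤
  rw [expDist_eq_integral, expDist_eq_integral, h, ← PMF.toMeasure_map (hf := .of_discrete),
    integral_map_of_stronglyMeasurable .of_discrete .of_discrete]
  rfl

end Distortion

section RateDistortion

variable {A B C A' B' : Type*} [Fintype A] [Fintype B] [Fintype C] [Fintype A'] [Fintype B']

lemma rate_eq_of_forall_exists_le {p : PMF A} {d : A → B → ℝ} {p' : PMF A'} {d' : A' → B' → ℝ}
    (h : ∀ k : A → PMF B, ∃ k' : A' → PMF B',
      expDist p' k' d' ≤ expDist p k d ∧ mutualInfo p' k' ≤ mutualInfo p k)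
    (h' : ∀ k' : A' → PMF B', ∃ k : A → PMF B,
      expDist p k d ≤ expDist p' k' d' ∧ mutualInfo p k ≤ mutualInfo p' k') (D : ℝ) :
    rate p d D = rate p' d' D := by
  refine csInf_eq_csInf_of_forall_exists_le ?_ ?_
  · rintro _ ⟨k, hk, rfl⟩
    obtain ⟨k', hdist, hinfo⟩ := h k
    exact ⟨_, ⟨k', hdist.trans hk, rfl⟩, hinfo⟩
  · rintro _ ⟨k', hk', rfl⟩
    obtain ⟨k, hdist, hinfo⟩ := h' k'
    exact ⟨_, ⟨k, hdist.trans hk', rfl⟩, hinfo⟩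

theorem rate_map_left (p : PMF A) (g : A → B) (d : B → C → ℝ) (D : ℝ) :
    rate (p.map g) d D = rate p (fun a c => d (g a) c) D := by
  refine rate_eq_of_forall_exists_le (fun k => ?_) (fun k => ?_) D
  · exact ⟨k ∘ g, (expDist_of_jointPMF_eq_map (jointPMF_map_left p g k) d).ge,
      mutualInfo_le_of_jointPMF_eq_bind _ _ (jointPMF_comp p g k)⟩
  · have h := jointPMF_posteriorPMF_bind p g k
    exact ⟨_, (expDist_of_jointPMF_eq_map h d).le, mutualInfo_le_of_jointPMF_eq_map h⟩

theorem rate_map_right (p : PMF A) (d : A → C → ℝ) (ψ : B → C)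
    (hψ : ∀ c, ∃ b, ∀ a, d a (ψ b) = d a c) (D : ℝ) :
    rate p (fun a b => d a (ψ b)) D = rate p d D := by
  choose s hs using hψ
  refine rate_eq_of_forall_exists_le (fun k => ?_) (fun k => ?_) D
  · have h := jointPMF_map_right p k ψ
    exact ⟨_, (expDist_of_jointPMF_eq_map h d).le, mutualInfo_le_of_jointPMF_eq_map h⟩
  · have h := jointPMF_map_right p k s
    refine ⟨_, ?_, mutualInfo_le_of_jointPMF_eq_map h⟩
    simp_rw [expDist_of_jointPMF_eq_map h fun a b => d a (ψ b), hs, id, le_refl]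

theorem rate_map_eq_rate_comp (p : PMF A) (g : A → B) (d : B → B → ℝ)
    (hd : ∀ b', ∃ a, ∀ b, d b (g a) = d b b') (D : ℝ) :
    rate (p.map g) d D = rate p (fun a a' => d (g a) (g a')) D := by
  rw [rate_map_left, rate_map_right p (fun a b => d (g a) b) g]
  exact fun b' => (hd b').imp fun _ ha b => ha (g b)

end RateDistortion

theorem split_points_equal_rates_general
    {𝒳 𝒴₁ 𝒴₂ 𝒯 : Type*} [Fintype 𝒳] [Fintype 𝒴₁] [Fintype 𝒴₂]
    (pX : PMF 𝒳) (g₁ : 𝒳 → 𝒴₁) (g₂ : 𝒴₁ → 𝒴₂) (h₂ : 𝒴₂ → 𝒯) (dT : 𝒯 → 𝒯 → ℝ)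
    (hr : ∀ yhat₂ : 𝒴₂, h₂ yhat₂ ∈ Set.range (fun x => h₂ (g₂ (g₁ x)))) (D : ℝ) :
    rate ((pX.map g₁).map g₂) (fun y₂ yhat₂ => dT (h₂ y₂) (h₂ yhat₂)) D
        = rate (pX.map g₁) (fun y₁ yhat₁ => dT (h₂ (g₂ y₁)) (h₂ (g₂ yhat₁))) D ∧
    rate (pX.map g₁) (fun y₁ yhat₁ => dT (h₂ (g₂ y₁)) (h₂ (g₂ yhat₁))) D
        = rate pX (fun x xhat => dT (h₂ (g₂ (g₁ x))) (h₂ (g₂ (g₁ xhat)))) D := by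
  choose s hs using hr
  refine ⟨rate_map_eq_rate_comp _ g₂ (fun y₂ yhat₂ => dT (h₂ y₂) (h₂ yhat₂)) ?_ D,
    rate_map_eq_rate_comp pX g₁ (fun y₁ yhat₁ => dT (h₂ (g₂ y₁)) (h₂ (g₂ yhat₁))) ?_ D⟩
  · exact fun yhat₂ => ⟨g₁ (s yhat₂), fun y₂ => congrArg (dT (h₂ y₂)) (hs yhat₂)⟩
  · exact fun yhat₁ => ⟨s (g₂ yhat₁), fun y₁ => congrArg (dT (h₂ (g₂ y₁))) (hs (g₂ yhat₁))⟩

/-- With f = h₂ ∘ g₂ ∘ g₁, if h₂(g₂(ŷ₁)) ∈ range f for all ŷ₁ and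
h₂(ŷ₂) ∈ range f for all ŷ₂, then for every D > 0,
R_{Y₂}(D;T) = R_{Y₁}(D;T) = R_X(D;T). -/
theorem split_points_equal_rates
    {𝒳 𝒴₁ 𝒴₂ 𝒯 : Type*} [Fintype 𝒳] [Fintype 𝒴₁] [Fintype 𝒴₂] [Fintype 𝒯]
    [Nonempty 𝒳] [Nonempty 𝒴₁] [Nonempty 𝒴₂] [Nonempty 𝒯]
    (pX : PMF 𝒳) (g₁ : 𝒳 → 𝒴₁) (g₂ : 𝒴₁ → 𝒴₂) (h₂ : 𝒴₂ → 𝒯)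
    (dT : 𝒯 → 𝒯 → ℝ) (hdT : ∀ t t', 0 ≤ dT t t')
    (hr1 : ∀ yhat₁ : 𝒴₁, h₂ (g₂ yhat₁) ∈ Set.range (fun x => h₂ (g₂ (g₁ x))))
    (hr2 : ∀ yhat₂ : 𝒴₂, h₂ yhat₂ ∈ Set.range (fun x => h₂ (g₂ (g₁ x))))
    (D : ℝ) (hD : 0 < D) :
    rate ((pX.map g₁).map g₂) (fun y₂ yhat₂ => dT (h₂ y₂) (h₂ yhat₂)) D
        = rate (pX.map g₁) (fun y₁ yhat₁ => dT (h₂ (g₂ y₁)) (h₂ (g₂ yhat₁))) D ∧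
    rate (pX.map g₁) (fun y₁ yhat₁ => dT (h₂ (g₂ y₁)) (h₂ (g₂ yhat₁))) D
        = rate pX (fun x xhat => dT (h₂ (g₂ (g₁ x))) (h₂ (g₂ (g₁ xhat)))) D :=
  split_points_equal_rates_general pX g₁ g₂ h₂ dT hr2 D
end
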